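/- Let θ = (θ₁, θ₂, θ₃) ∈ ℝ³ with θ_i > 0 for all i and θ₁ + θ₂ + θ₃ = π, and define ψ_θ : ℝ³ → ℝ by ψ_θ(y) = G(y) − θ₁y₁ − θ₂y₂ − θ₃y₃. Then ψ_θ is convex, ψ_θ(y + (k, k, k)) = ψ_θ(y) for all y ∈ ℝ³ and k ∈ ℝ, and ψ_θ(y) → +∞ as max_{i,j}|y_i − y_j| → ∞. -/

import Mathlib

/-- The Lobachevsky function `Λ(t) = -∫₀ᵗ log |2 sin s| ds`. -/
noncomputable def Lob (t : ℝ) : ℝ := -∫ s in (0 : ℝ)..t, Real.log |2 * Real.sin s|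

/-- The inner angle, opposite the edge of length `x i`, of the generalized Euclidean
triangle of edge lengths `x 0, x 1, x 2` (clamped arccos convention). -/
noncomputable def ang (i : Fin 3) (x : Fin 3 → ℝ) : ℝ :=
  Real.arccos (((x (i + 1)) ^ 2 + (x (i + 2)) ^ 2 - (x i) ^ 2) / (2 * x (i + 1) * x (i + 2)))

/-- `G(y) = Σᵢ (Λ(aᵢ) + aᵢ yᵢ)`, where `aᵢ` are the inner angles of the generalized
Euclidean triangle of edge lengths `e^{y₁}, e^{y₂}, e^{y₃}`. -/
noncomputable def Gfn (y : Fin 3 → ℝ) : ℝ :=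
  ∑ i : Fin 3,
    (Lob (ang i (fun m => Real.exp (y m))) + ang i (fun m => Real.exp (y m)) * y i)

/-- `ψ_θ(y) = G(y) − θ₁y₁ − θ₂y₂ − θ₃y₃`. -/
noncomputable def psiT (θ : Fin 3 → ℝ) (y : Fin 3 → ℝ) : ℝ :=
  Gfn y - (θ 0 * y 0 + θ 1 * y 1 + θ 2 * y 2)

theorem stmt6_aux_int (a b : ℝ) :
    IntervalIntegrable (fun s => Real.log |2 * Real.sin s|) MeasureTheory.volume a b := by
  have h : IntervalIntegrable (fun s => Real.log 2 + Real.log (Real.sin s))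
      MeasureTheory.volume a b :=
    intervalIntegrable_const.add intervalIntegrable_log_sin
  refine h.congr_ae ?_
  apply MeasureTheory.ae_restrict_of_ae
  have hc : ({s : ℝ | Real.sin s = 0}).Countable := by
    have : {s : ℝ | Real.sin s = 0} = Set.range (fun n : ℤ => (n : ℝ) * Real.pi) := by
      ext s; simp [Real.sin_eq_zero_iff]
    rw [this]; exact Set.countable_range _
  have := hc.ae_notMem MeasureTheory.volume
  filter_upwards [this] with s hs
  have hs : Real.sin s ≠ 0 := hs
  rw [Real.log_abs, Real.log_mul (by norm_num) hs]

theorem Lob_continuous : Continuous Lob := by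
  unfold Lob
  exact (intervalIntegral.continuous_primitive (fun a b => stmt6_aux_int a b) 0).neg

theorem Lob_hasDerivAt {t : ℝ} (h0 : 0 < t) (h1 : t < Real.pi) :
    HasDerivAt Lob (-Real.log (2 * Real.sin t)) t := by
  have hs := Real.sin_pos_of_pos_of_lt_pi h0 h1
  have hm : Measurable (fun s => Real.log |2 * Real.sin s|) := by
    simp only [Real.log_abs]
    exact Real.measurable_log.comp (Real.continuous_sin.measurable.const_mul 2)
  have hc : ContinuousAt (fun s => Real.log |2 * Real.sin s|) t := by
    apply ContinuousAt.log
    · fun_prop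
    · positivity
  have := (intervalIntegral.integral_hasDerivAt_right (stmt6_aux_int 0 t)
    (hm.stronglyMeasurable.stronglyMeasurableAtFilter) hc).neg
  rw [abs_of_pos (by positivity)] at this
  exact this

theorem Lob_zero : Lob 0 = 0 := by simp [Lob]

theorem Lob_pi : Lob Real.pi = 0 := by
  have : ∫ s in (0 : ℝ)..Real.pi, Real.log |2 * Real.sin s|
      = ∫ s in (0 : ℝ)..Real.pi, (Real.log 2 + Real.log (Real.sin s)) := by
    rw [intervalIntegral.integral_of_le Real.pi_pos.le,
      intervalIntegral.integral_of_le Real.pi_pos.le,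
      MeasureTheory.integral_Ioc_eq_integral_Ioo, MeasureTheory.integral_Ioc_eq_integral_Ioo]
    apply MeasureTheory.setIntegral_congr_fun measurableSet_Ioo
    intro s hs
    have hs' := Real.sin_pos_of_pos_of_lt_pi hs.1 hs.2
    simp only
    rw [Real.log_abs, Real.log_mul (by norm_num) hs'.ne']
  have hi : IntervalIntegrable (fun s => Real.log (Real.sin s)) MeasureTheory.volume 0 Real.pi :=
    intervalIntegrable_log_sin
  rw [Lob, this, intervalIntegral.integral_add intervalIntegrable_const hi, integral_log_sin_zero_pi]
  simp
  ring

/-- angle opposite x -/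
noncomputable def angA (x y z : ℝ) : ℝ := Real.arccos ((y ^ 2 + z ^ 2 - x ^ 2) / (2 * y * z))

theorem angA_degen {x y z : ℝ} (hx : 0 < x) (hy : 0 < y) (hz : 0 < z) (h : y + z ≤ x) :
    angA x y z = Real.pi ∧ angA y z x = 0 ∧ angA z x y = 0 := by
  refine ⟨?_, ?_, ?_⟩
  · apply Real.arccos_of_le_neg_one
    rw [div_le_iff₀ (by positivity)]
    nlinarith
  · apply Real.arccos_of_one_le
    rw [le_div_iff₀ (by positivity)]
    nlinarith
  · apply Real.arccos_of_one_le
    rw [le_div_iff₀ (by positivity)]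
    nlinarith

theorem angA_sin {x y z : ℝ} (hx : 0 < x) (hy : 0 < y) (hz : 0 < z)
    (h1 : x < y + z) (h2 : y < z + x) (h3 : z < x + y) :
    Real.sin (angA x y z)
      = √((x + y + z) * (y + z - x) * (z + x - y) * (x + y - z)) / (2 * y * z) := by
  rw [angA, Real.sin_arccos]
  have : (0 : ℝ) < 2 * y * z := by positivity
  rw [eq_div_iff this.ne']
  nth_rewrite 2 [← Real.sqrt_sq this.le]
  rw [← Real.sqrt_mul' _ (by positivity)]
  congr 1
  field_simp
  ring

theorem angA_cos {x y z : ℝ} (hx : 0 < x) (hy : 0 < y) (hz : 0 < z)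
    (h1 : x < y + z) (h2 : y < z + x) (h3 : z < x + y) :
    Real.cos (angA x y z) = (y ^ 2 + z ^ 2 - x ^ 2) / (2 * y * z) := by
  rw [angA, Real.cos_arccos]
  · rw [le_div_iff₀ (by positivity)]
    nlinarith
  · rw [div_le_iff₀ (by positivity)]
    nlinarith

theorem angA_nonneg (x y z : ℝ) : 0 ≤ angA x y z := Real.arccos_nonneg _

theorem angA_sum_nondegen {x y z : ℝ} (hx : 0 < x) (hy : 0 < y) (hz : 0 < z)
    (h1 : x < y + z) (h2 : y < z + x) (h3 : z < x + y) :
    angA x y z + angA y z x + angA z x y = Real.pi := by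
  have s1 := angA_sin hx hy hz h1 h2 h3
  have s2 := angA_sin hy hz hx h2 h3 h1
  have c1 := angA_cos hx hy hz h1 h2 h3
  have c2 := angA_cos hy hz hx h2 h3 h1
  have c3 := angA_cos hz hx hy h3 h1 h2
  have e2 : (y + z + x) * (z + x - y) * (x + y - z) * (y + z - x)
    = (x + y + z) * (y + z - x) * (z + x - y) * (x + y - z) := by ring
  rw [e2] at s2
  have hP : 0 < (x + y + z) * (y + z - x) * (z + x - y) * (x + y - z) := by
    have : 0 < y + z - x := by linarith
    have : 0 < z + x - y := by linarith
    have : 0 < x + y - z := by linarith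
    positivity
  have hD := Real.sqrt_pos.mpr hP
  have hD2 := Real.sq_sqrt hP.le
  set D := √((x + y + z) * (y + z - x) * (z + x - y) * (x + y - z)) with hDdef
  have hcos : Real.cos (angA x y z + angA y z x) = Real.cos (Real.pi - angA z x y) := by
    rw [Real.cos_pi_sub, Real.cos_add, s1, s2, c1, c2, c3]
    field_simp
    rw [hD2]
    ring
  have hsin : 0 < Real.sin (angA x y z + angA y z x) := by
    have : Real.sin (angA x y z + angA y z x) = D / (2 * x * y) := by
      rw [Real.sin_add, s1, s2, c1, c2]
      field_simp
      ring
    rw [this]; positivity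
  have p1 : 0 ≤ angA x y z := Real.arccos_nonneg _
  have p2 : 0 ≤ angA y z x := Real.arccos_nonneg _
  have p3 : 0 ≤ angA z x y := Real.arccos_nonneg _
  have q1 : angA x y z ≤ Real.pi := Real.arccos_le_pi _
  have q2 : angA y z x ≤ Real.pi := Real.arccos_le_pi _
  have q3 : angA z x y ≤ Real.pi := Real.arccos_le_pi _
  have hle : angA x y z + angA y z x ≤ Real.pi := by
    by_contra hcon
    push Not at hcon
    have := Real.sin_nonneg_of_nonneg_of_le_pi
      (x := angA x y z + angA y z x - Real.pi) (by linarith) (by linarith)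
    rw [Real.sin_sub_pi] at this
    linarith
  have := Real.injOn_cos ⟨by linarith, hle⟩ ⟨by linarith, by linarith⟩ hcos
  linarith

theorem angA_sum {x y z : ℝ} (hx : 0 < x) (hy : 0 < y) (hz : 0 < z) :
    angA x y z + angA y z x + angA z x y = Real.pi := by
  by_cases h1 : y + z ≤ x
  · obtain ⟨a, b, c⟩ := angA_degen hx hy hz h1
    rw [a, b, c]; ring
  by_cases h2 : z + x ≤ y
  · obtain ⟨a, b, c⟩ := angA_degen hy hz hx h2
    rw [a, b, c]; ring
  by_cases h3 : x + y ≤ z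
  · obtain ⟨a, b, c⟩ := angA_degen hz hx hy h3
    rw [a, b, c]; ring
  push Not at h1 h2 h3
  exact angA_sum_nondegen hx hy hz h1 h2 h3

theorem cot_form_nonneg {u v w d e f : ℝ} (hu : 0 < u) (hv : 0 < v) (hw : 0 < w)
    (hs : u + v + w = Real.pi) (hd : d + e + f = 0) :
    0 ≤ d ^ 2 * (Real.cos u / Real.sin u) + e ^ 2 * (Real.cos v / Real.sin v)
      + f ^ 2 * (Real.cos w / Real.sin w) := by
  have su := Real.sin_pos_of_pos_of_lt_pi hu (by linarith)
  have sv := Real.sin_pos_of_pos_of_lt_pi hv (by linarith)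
  have sw := Real.sin_pos_of_pos_of_lt_pi hw (by linarith)
  have hwe : w = Real.pi - (u + v) := by linarith
  have hsw : Real.sin w = Real.sin u * Real.cos v + Real.cos u * Real.sin v := by
    rw [hwe, Real.sin_pi_sub, Real.sin_add]
  have hcw : Real.cos w = Real.sin u * Real.sin v - Real.cos u * Real.cos v := by
    rw [hwe, Real.cos_pi_sub, Real.cos_add]; ring
  have hf : f = -(d + e) := by linarith
  have pu := Real.sin_sq_add_cos_sq u
  have pv := Real.sin_sq_add_cos_sq v
  have pw := Real.sin_sq_add_cos_sq w
  have i1 : Real.cos u * Real.sin w + Real.sin u * Real.cos w = Real.sin v := by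
    rw [hsw, hcw]; linear_combination Real.sin v * pu
  have i2 : Real.cos v * Real.sin w + Real.sin v * Real.cos w = Real.sin u := by
    rw [hsw, hcw]; linear_combination Real.sin u * pv
  have key : d ^ 2 * (Real.cos u / Real.sin u) + e ^ 2 * (Real.cos v / Real.sin v)
      + f ^ 2 * (Real.cos w / Real.sin w)
      = ((d * Real.sin v + e * Real.sin u * Real.cos w) ^ 2
        + (e * Real.sin u * Real.sin w) ^ 2) / (Real.sin u * Real.sin v * Real.sin w) := by
    rw [hf]
    field_simp
    linear_combination (d ^ 2 * Real.sin v) * i1 + (e ^ 2 * Real.sin u) * i2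
      - (e ^ 2 * Real.sin u ^ 2) * pw
  rw [key]
  positivity

/-- Concavity / tangent inequality at an interior point. -/
theorem tangent_ineq {a₁ a₂ a₃ b₁ b₂ b₃ y₁ y₂ y₃ c : ℝ}
    (ha₁ : 0 < a₁) (ha₂ : 0 < a₂) (ha₃ : 0 < a₃) (has : a₁ + a₂ + a₃ = Real.pi)
    (hb₁ : 0 ≤ b₁) (hb₂ : 0 ≤ b₂) (hb₃ : 0 ≤ b₃) (hbs : b₁ + b₂ + b₃ = Real.pi)
    (e₁ : y₁ = c + Real.log (2 * Real.sin a₁)) (e₂ : y₂ = c + Real.log (2 * Real.sin a₂))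
    (e₃ : y₃ = c + Real.log (2 * Real.sin a₃)) :
    (Lob b₁ + b₁ * y₁) + (Lob b₂ + b₂ * y₂) + (Lob b₃ + b₃ * y₃)
      ≤ (Lob a₁ + a₁ * y₁) + (Lob a₂ + a₂ * y₂) + (Lob a₃ + a₃ * y₃) := by
  have hpos : ∀ {a b t : ℝ}, 0 < a → 0 ≤ b → 0 ≤ t → t < 1 → 0 < a + t * (b - a) := by
    intro a b t ha hb h0 h1
    nlinarith [mul_nonneg h0 hb, mul_pos ha (sub_pos.mpr h1)]
  have hsum : ∀ t : ℝ, (a₁ + t * (b₁ - a₁)) + (a₂ + t * (b₂ - a₂)) + (a₃ + t * (b₃ - a₃))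
      = Real.pi := by
    intro t; linear_combination (1 - t) * has + t * hbs
  have hlin : ∀ a b t : ℝ, HasDerivAt (fun t : ℝ => a + t * (b - a)) (b - a) t := by
    intro a b t
    simpa using ((hasDerivAt_id t).mul_const (b - a)).const_add a
  let g : ℝ → ℝ → ℝ → ℝ → ℝ := fun a b y t =>
    Lob (a + t * (b - a)) + (a + t * (b - a)) * y
  let g' : ℝ → ℝ → ℝ → ℝ → ℝ := fun a b y t =>
    (b - a) * (y - Real.log (2 * Real.sin (a + t * (b - a))))
  let g'' : ℝ → ℝ → ℝ → ℝ := fun a b t =>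
    - ((b - a) ^ 2 * (Real.cos (a + t * (b - a)) / Real.sin (a + t * (b - a))))
  have hg : ∀ a b y t : ℝ, 0 < a + t * (b - a) → a + t * (b - a) < Real.pi →
      HasDerivAt (g a b y) (g' a b y t) t := by
    intro a b y t h0 h1
    have h := ((Lob_hasDerivAt h0 h1).comp t (hlin a b t)).add ((hlin a b t).mul_const y)
    refine h.congr_deriv ?_
    simp only [g']; ring
  have hg' : ∀ a b y t : ℝ, 0 < a + t * (b - a) → a + t * (b - a) < Real.pi →
      HasDerivAt (g' a b y) (g'' a b t) t := by
    intro a b y t h0 h1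
    have hs := Real.sin_pos_of_pos_of_lt_pi h0 h1
    have h := ((((Real.hasDerivAt_sin (a + t * (b - a))).comp t (hlin a b t)).const_mul 2).log
      (by simp only [Function.comp]; positivity))
    have h2 := (h.const_sub y).const_mul (b - a)
    refine h2.congr_deriv ?_
    simp only [g'', Function.comp]
    field_simp
  have hgc : ∀ a b y : ℝ, Continuous (g a b y) := by
    intro a b y
    have := Lob_continuous
    simp only [g]
    fun_prop
  let F : ℝ → ℝ := fun t => g a₁ b₁ y₁ t + g a₂ b₂ y₂ t + g a₃ b₃ y₃ t
  let F' : ℝ → ℝ := fun t => g' a₁ b₁ y₁ t + g' a₂ b₂ y₂ t + g' a₃ b₃ y₃ t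
  have hF : ∀ t, 0 ≤ t → t < 1 → HasDerivAt F (F' t) t := by
    intro t h0 h1
    have p1 := hpos ha₁ hb₁ h0 h1
    have p2 := hpos ha₂ hb₂ h0 h1
    have p3 := hpos ha₃ hb₃ h0 h1
    have := hsum t
    exact ((hg _ _ _ _ p1 (by linarith)).add (hg _ _ _ _ p2 (by linarith))).add
      (hg _ _ _ _ p3 (by linarith))
  have hF' : ∀ t, 0 ≤ t → t < 1 →
      HasDerivAt F' (g'' a₁ b₁ t + g'' a₂ b₂ t + g'' a₃ b₃ t) t := by
    intro t h0 h1
    have p1 := hpos ha₁ hb₁ h0 h1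
    have p2 := hpos ha₂ hb₂ h0 h1
    have p3 := hpos ha₃ hb₃ h0 h1
    have := hsum t
    exact ((hg' _ _ _ _ p1 (by linarith)).add (hg' _ _ _ _ p2 (by linarith))).add
      (hg' _ _ _ _ p3 (by linarith))
  have hF'0 : F' 0 = 0 := by
    simp only [F', g', zero_mul, add_zero]
    rw [e₁, e₂, e₃]
    linear_combination c * hbs - c * has
  have hanti : AntitoneOn F' (Set.Ico 0 1) := by
    apply antitoneOn_of_deriv_nonpos (convex_Ico 0 1)
    · intro t ht
      exact (hF' t ht.1 ht.2).continuousAt.continuousWithinAt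
    · intro t ht
      rw [interior_Ico] at ht
      exact (hF' t ht.1.le ht.2).differentiableAt.differentiableWithinAt
    · intro t ht
      rw [interior_Ico] at ht
      rw [(hF' t ht.1.le ht.2).deriv]
      have := cot_form_nonneg (hpos ha₁ hb₁ ht.1.le ht.2) (hpos ha₂ hb₂ ht.1.le ht.2)
        (hpos ha₃ hb₃ ht.1.le ht.2) (hsum t)
        (show (b₁ - a₁) + (b₂ - a₂) + (b₃ - a₃) = 0 by linarith)
      simp only [g'']
      linarith
  have hFanti : AntitoneOn F (Set.Icc 0 1) := by
    apply antitoneOn_of_deriv_nonpos (convex_Icc 0 1)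
    · exact (((hgc _ _ _).add (hgc _ _ _)).add (hgc _ _ _)).continuousOn
    · intro t ht
      rw [interior_Icc] at ht
      exact (hF t ht.1.le ht.2).differentiableAt.differentiableWithinAt
    · intro t ht
      rw [interior_Icc] at ht
      rw [(hF t ht.1.le ht.2).deriv, ← hF'0]
      exact hanti ⟨le_rfl, by norm_num⟩ ⟨ht.1.le, ht.2⟩ ht.1.le
  have := hFanti (a := 0) (b := 1) (by simp) (by simp) (by norm_num)
  simpa [F, g] using this

noncomputable def G3 (p q r : ℝ) : ℝ :=
  (Lob (angA (Real.exp p) (Real.exp q) (Real.exp r))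
      + angA (Real.exp p) (Real.exp q) (Real.exp r) * p)
  + (Lob (angA (Real.exp q) (Real.exp r) (Real.exp p))
      + angA (Real.exp q) (Real.exp r) (Real.exp p) * q)
  + (Lob (angA (Real.exp r) (Real.exp p) (Real.exp q))
      + angA (Real.exp r) (Real.exp p) (Real.exp q) * r)

theorem G3_cyc (p q r : ℝ) : G3 p q r = G3 q r p := by
  unfold G3; ring

theorem G3_ge_nondegen {p q r b₁ b₂ b₃ : ℝ}
    (h1 : Real.exp p < Real.exp q + Real.exp r) (h2 : Real.exp q < Real.exp r + Real.exp p)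
    (h3 : Real.exp r < Real.exp p + Real.exp q)
    (hb₁ : 0 ≤ b₁) (hb₂ : 0 ≤ b₂) (hb₃ : 0 ≤ b₃) (hbs : b₁ + b₂ + b₃ = Real.pi) :
    (Lob b₁ + b₁ * p) + (Lob b₂ + b₂ * q) + (Lob b₃ + b₃ * r) ≤ G3 p q r := by
  have hx := Real.exp_pos p
  have hy := Real.exp_pos q
  have hz := Real.exp_pos r
  have lx := Real.log_exp p
  have ly := Real.log_exp q
  have lz := Real.log_exp r
  unfold G3
  generalize Real.exp p = x at *
  generalize Real.exp q = y at *
  generalize Real.exp r = z at *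
  have s1 := angA_sin hx hy hz h1 h2 h3
  have s2 := angA_sin hy hz hx h2 h3 h1
  have s3 := angA_sin hz hx hy h3 h1 h2
  have e2 : (y + z + x) * (z + x - y) * (x + y - z) * (y + z - x)
    = (x + y + z) * (y + z - x) * (z + x - y) * (x + y - z) := by ring
  have e3 : (z + x + y) * (x + y - z) * (y + z - x) * (z + x - y)
    = (x + y + z) * (y + z - x) * (z + x - y) * (x + y - z) := by ring
  rw [e2] at s2
  rw [e3] at s3
  have hP : 0 < (x + y + z) * (y + z - x) * (z + x - y) * (x + y - z) := by
    have : 0 < y + z - x := by linarith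
    have : 0 < z + x - y := by linarith
    have : 0 < x + y - z := by linarith
    positivity
  have hD := Real.sqrt_pos.mpr hP
  set D := √((x + y + z) * (y + z - x) * (z + x - y) * (x + y - z)) with hDdef
  have hpos : ∀ u v w : ℝ, 0 < Real.sin (angA u v w) → 0 < angA u v w := by
    intro u v w h
    rcases (angA_nonneg u v w).lt_or_eq with h' | h'
    · exact h'
    · rw [← h'] at h; simp at h
  have hlog : ∀ u v w : ℝ, 0 < u → 0 < v → 0 < w →
      Real.log u = Real.log (u * v * w / D) + Real.log (2 * (D / (2 * v * w))) := by
    intro u v w hu hv hw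
    rw [← Real.log_mul (by positivity) (by positivity)]
    congr 1
    field_simp
  refine tangent_ineq (c := Real.log (x * y * z / D)) (hpos _ _ _ ?_) (hpos _ _ _ ?_)
    (hpos _ _ _ ?_)
    (angA_sum hx hy hz) hb₁ hb₂ hb₃ hbs ?_ ?_ ?_
  · rw [s1]; positivity
  · rw [s2]; positivity
  · rw [s3]; positivity
  · rw [s1, ← lx]; exact hlog x y z hx hy hz
  · rw [s2, ← ly, hlog y z x hy hz hx, show y * z * x = x * y * z by ring]
  · rw [s3, ← lz, hlog z x y hz hx hy, show z * x * y = x * y * z by ring]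

theorem G3_degen {p q r : ℝ} (h : Real.exp q + Real.exp r ≤ Real.exp p) :
    G3 p q r = Real.pi * p := by
  obtain ⟨h1, h2, h3⟩ := angA_degen (Real.exp_pos p) (Real.exp_pos q) (Real.exp_pos r) h
  rw [G3, h1, h2, h3, Lob_pi, Lob_zero]; ring

theorem G3_continuous (q r : ℝ) : Continuous (fun p => G3 p q r) := by
  have hA : Continuous (fun p => angA (Real.exp p) (Real.exp q) (Real.exp r)) := by
    unfold angA
    refine Real.continuous_arccos.comp (Continuous.div (by fun_prop) (by fun_prop) ?_)
    intro p; positivity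
  have hB : Continuous (fun p => angA (Real.exp q) (Real.exp r) (Real.exp p)) := by
    unfold angA
    refine Real.continuous_arccos.comp (Continuous.div (by fun_prop) (by fun_prop) ?_)
    intro p; positivity
  have hC : Continuous (fun p => angA (Real.exp r) (Real.exp p) (Real.exp q)) := by
    unfold angA
    refine Real.continuous_arccos.comp (Continuous.div (by fun_prop) (by fun_prop) ?_)
    intro p; positivity
  have hL := Lob_continuous
  unfold G3
  fun_prop

theorem G3_ge_degen {p q r b₁ b₂ b₃ : ℝ} (h : Real.exp q + Real.exp r ≤ Real.exp p)
    (hb₁ : 0 ≤ b₁) (hb₂ : 0 ≤ b₂) (hb₃ : 0 ≤ b₃) (hbs : b₁ + b₂ + b₃ = Real.pi) :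
    (Lob b₁ + b₁ * p) + (Lob b₂ + b₂ * q) + (Lob b₃ + b₃ * r) ≤ G3 p q r := by
  have hq := Real.exp_pos q
  have hr := Real.exp_pos r
  set p₀ := Real.log (Real.exp q + Real.exp r) with hp₀
  have ep₀ : Real.exp p₀ = Real.exp q + Real.exp r := Real.exp_log (by positivity)
  have hpp : p₀ ≤ p := by
    rw [← Real.exp_le_exp, ep₀]; exact h
  have hqp : q < p₀ := by rw [← Real.exp_lt_exp, ep₀]; linarith
  have hrp : r < p₀ := by rw [← Real.exp_lt_exp, ep₀]; linarith
  have hlim : (Lob b₁ + b₁ * p₀) + (Lob b₂ + b₂ * q) + (Lob b₃ + b₃ * r) ≤ G3 p₀ q r := by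
    have c1 : Continuous (fun s => (Lob b₁ + b₁ * s) + (Lob b₂ + b₂ * q) + (Lob b₃ + b₃ * r)) := by
      fun_prop
    have t1 := (c1.tendsto p₀).mono_left (nhdsWithin_le_nhds (s := Set.Iio p₀))
    have t2 := ((G3_continuous q r).tendsto p₀).mono_left (nhdsWithin_le_nhds (s := Set.Iio p₀))
    refine le_of_tendsto_of_tendsto t1 t2 ?_
    have hm : max q r < p₀ := max_lt hqp hrp
    filter_upwards [Ioo_mem_nhdsLT hm] with s hs
    have hs1 := Real.exp_lt_exp.mpr hs.2
    have hs2 := Real.exp_lt_exp.mpr ((le_max_left q r).trans_lt hs.1)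
    have hs3 := Real.exp_lt_exp.mpr ((le_max_right q r).trans_lt hs.1)
    exact G3_ge_nondegen (by linarith) (by linarith) (by linarith) hb₁ hb₂ hb₃ hbs
  rw [G3_degen ep₀.ge] at hlim
  rw [G3_degen h]
  nlinarith [mul_nonneg (sub_nonneg.mpr hpp) (show 0 ≤ Real.pi - b₁ by linarith)]

theorem G3_ge (p q r : ℝ) {b₁ b₂ b₃ : ℝ}
    (hb₁ : 0 ≤ b₁) (hb₂ : 0 ≤ b₂) (hb₃ : 0 ≤ b₃) (hbs : b₁ + b₂ + b₃ = Real.pi) :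
    (Lob b₁ + b₁ * p) + (Lob b₂ + b₂ * q) + (Lob b₃ + b₃ * r) ≤ G3 p q r := by
  by_cases h1 : Real.exp q + Real.exp r ≤ Real.exp p
  · exact G3_ge_degen h1 hb₁ hb₂ hb₃ hbs
  by_cases h2 : Real.exp r + Real.exp p ≤ Real.exp q
  · have := G3_ge_degen h2 hb₂ hb₃ hb₁ (by linarith)
    rw [G3_cyc]; linarith
  by_cases h3 : Real.exp p + Real.exp q ≤ Real.exp r
  · have := G3_ge_degen h3 hb₃ hb₁ hb₂ (by linarith)
    rw [G3_cyc, G3_cyc]; linarith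
  push Not at h1 h2 h3
  exact G3_ge_nondegen h1 h2 h3 hb₁ hb₂ hb₃ hbs

theorem Gfn_eq (y : Fin 3 → ℝ) : Gfn y = G3 (y 0) (y 1) (y 2) := by
  rw [Gfn, Fin.sum_univ_three]
  rfl

theorem angA_scale {x y z k : ℝ} (hk : 0 < k) :
    angA (x * k) (y * k) (z * k) = angA x y z := by
  unfold angA
  congr 1
  rw [show (y * k) ^ 2 + (z * k) ^ 2 - (x * k) ^ 2 = (y ^ 2 + z ^ 2 - x ^ 2) * k ^ 2 by ring,
    show 2 * (y * k) * (z * k) = 2 * y * z * k ^ 2 by ring,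
    mul_div_mul_right _ _ (by positivity)]

theorem stmt6 (θ : Fin 3 → ℝ) (hpos : ∀ i, 0 < θ i)
    (hsum : θ 0 + θ 1 + θ 2 = Real.pi) :
    ConvexOn ℝ Set.univ (psiT θ) ∧
    (∀ y : Fin 3 → ℝ, ∀ k : ℝ, psiT θ (y + fun _ => k) = psiT θ y) ∧
    Filter.Tendsto (psiT θ)
      (Filter.comap (fun y : Fin 3 → ℝ => max (max |y 0 - y 1| |y 0 - y 2|) |y 1 - y 2|)
        Filter.atTop)
      Filter.atTop := by
  refine ⟨⟨convex_univ, ?_⟩, ?_, ?_⟩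
  · intro y _ z _ s t hs ht hst
    simp only [psiT, Gfn_eq, Pi.add_apply, Pi.smul_apply, smul_eq_mul]
    set p := s * y 0 + t * z 0
    set q := s * y 1 + t * z 1
    set r := s * y 2 + t * z 2
    have hs3 := angA_sum (Real.exp_pos p) (Real.exp_pos q) (Real.exp_pos r)
    have n1 := angA_nonneg (Real.exp p) (Real.exp q) (Real.exp r)
    have n2 := angA_nonneg (Real.exp q) (Real.exp r) (Real.exp p)
    have n3 := angA_nonneg (Real.exp r) (Real.exp p) (Real.exp q)
    have hy := mul_le_mul_of_nonneg_left (G3_ge (y 0) (y 1) (y 2) n1 n2 n3 hs3) hs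
    have hz := mul_le_mul_of_nonneg_left (G3_ge (z 0) (z 1) (z 2) n1 n2 n3 hs3) ht
    have e := G3.eq_1 p q r
    generalize angA (Real.exp p) (Real.exp q) (Real.exp r) = A at *
    generalize angA (Real.exp q) (Real.exp r) (Real.exp p) = B at *
    generalize angA (Real.exp r) (Real.exp p) (Real.exp q) = C at *
    have : G3 p q r = s * (Lob A + A * y 0 + (Lob B + B * y 1) + (Lob C + C * y 2))
        + t * (Lob A + A * z 0 + (Lob B + B * z 1) + (Lob C + C * z 2)) := by
      have ht' : t = 1 - s := by linarith
      rw [e]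
      simp only [p, q, r, ht']
      ring
    rw [this]
    simp only [p, q, r]
    linarith
  · intro y k
    simp only [psiT, Gfn_eq, Pi.add_apply]
    have hs3 := angA_sum (Real.exp_pos (y 0)) (Real.exp_pos (y 1)) (Real.exp_pos (y 2))
    simp only [G3, Real.exp_add, angA_scale (Real.exp_pos k)]
    linear_combination k * hs3 - k * hsum
  · obtain ⟨m, hm, hm0, hm1, hm2⟩ : ∃ m : ℝ, 0 < m ∧ m ≤ θ 0 ∧ m ≤ θ 1 ∧ m ≤ θ 2 :=
      ⟨min (min (θ 0) (θ 1)) (θ 2), by simp [hpos], by simp, by simp, by simp⟩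
    have hpi := Real.pi_pos
    have hbound : ∀ y : Fin 3 → ℝ,
        m * max (max |y 0 - y 1| |y 0 - y 2|) |y 1 - y 2| ≤ psiT θ y := by
      intro y
      have g0 := G3_ge (y 0) (y 1) (y 2) hpi.le le_rfl le_rfl (by ring)
      have g1 := G3_ge (y 0) (y 1) (y 2) le_rfl hpi.le le_rfl (by ring)
      have g2 := G3_ge (y 0) (y 1) (y 2) le_rfl le_rfl hpi.le (by ring)
      simp only [Lob_pi, Lob_zero, zero_mul, zero_add, add_zero] at g0 g1 g2
      rw [psiT, Gfn_eq]
      generalize G3 (y 0) (y 1) (y 2) = G at *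
      generalize y 0 = p at *
      generalize y 1 = q at *
      generalize y 2 = r at *
      have p0 := hpos 0
      have p1 := hpos 1
      have p2 := hpos 2
      generalize θ 0 = a at *
      generalize θ 1 = b at *
      generalize θ 2 = c at *
      subst_vars
      rw [← hsum] at g0 g1 g2
      have key : ∀ M, p ≤ M → q ≤ M → r ≤ M → (a + b + c) * M ≤ G →
          m * (M - p) ≤ G - (a * p + b * q + c * r) ∧
          m * (M - q) ≤ G - (a * p + b * q + c * r) ∧
          m * (M - r) ≤ G - (a * p + b * q + c * r) := by
        intro M h1 h2 h3 h4
        have x1 := mul_nonneg p0.le (sub_nonneg.mpr h1)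
        have x2 := mul_nonneg p1.le (sub_nonneg.mpr h2)
        have x3 := mul_nonneg p2.le (sub_nonneg.mpr h3)
        have y1 := mul_le_mul_of_nonneg_right hm0 (sub_nonneg.mpr h1)
        have y2 := mul_le_mul_of_nonneg_right hm1 (sub_nonneg.mpr h2)
        have y3 := mul_le_mul_of_nonneg_right hm2 (sub_nonneg.mpr h3)
        refine ⟨?_, ?_, ?_⟩ <;> linarith
      obtain ⟨M, h1, h2, h3, h4⟩ : ∃ M, p ≤ M ∧ q ≤ M ∧ r ≤ M ∧ (a + b + c) * M ≤ G := by
        rcases le_total p q with h | h <;> rcases le_total q r with h' | h' <;>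
          rcases le_total p r with h'' | h''
        all_goals first
          | exact ⟨p, by linarith, by linarith, by linarith, g0⟩
          | exact ⟨q, by linarith, by linarith, by linarith, g1⟩
          | exact ⟨r, by linarith, by linarith, by linarith, g2⟩
      obtain ⟨k1, k2, k3⟩ := key M h1 h2 h3 h4
      have hle : max (max |p - q| |p - r|) |q - r| ≤ max (max (M - p) (M - q)) (M - r) := by
        simp only [max_le_iff, abs_le, le_max_iff, neg_le]
        grind
      refine (mul_le_mul_of_nonneg_left hle hm.le).trans ?_
      rcases max_choice (max (M - p) (M - q)) (M - r) with h | h <;> rw [h]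
      · rcases max_choice (M - p) (M - q) with h | h <;> rw [h] <;> assumption
      · assumption
    refine Filter.tendsto_atTop_mono hbound ?_
    exact (Filter.Tendsto.const_mul_atTop hm Filter.tendsto_id).comp Filter.tendsto_comap
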